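/- Let R be a reduced local Cohen–Macaulay ring and I a reflexive ideal of R with regular trace ideal. Then tr_R(I) is reflexive if and only if tr_R(I) = tr_R(End_R(I)). -/

import Mathlib

open IsLocalRing

noncomputable def traceIdeal (R : Type*) [CommRing R] (M : Type*) [AddCommGroup M]
    [Module R M] : Ideal R :=
  ⨆ f : M →ₗ[R] R, LinearMap.range f

def IsCohenMacaulayLocalRing (R : Type*) [CommRing R] [IsLocalRing R] : Prop :=
  ∃ rs : List R, (∀ r ∈ rs, r ∈ maximalIdeal R) ∧ RingTheory.Sequence.IsRegular R rs ∧
    ringKrullDim R = rs.length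

noncomputable def moduleLength (R M : Type*) [CommRing R] [AddCommGroup M] [Module R M] :
    WithBot ℕ∞ :=
  Order.krullDim (Submodule R M)

noncomputable def conductorIdeal (R : Type*) [CommRing R] : Ideal R :=
  Submodule.colon (1 : Submodule R (FractionRing R))
    (Subalgebra.toSubmodule (integralClosure R (FractionRing R)))

def idealIntegralClosure {R : Type*} [CommRing R] (I : Ideal R) : Set R :=
  {x | ∃ n : ℕ, 0 < n ∧ ∃ a : ℕ → R, (∀ i ∈ Finset.Icc 1 n, a i ∈ I ^ i) ∧
    x ^ n + ∑ i ∈ Finset.Icc 1 n, a i * x ^ (n - i) = 0}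

def HasMinimalMultiplicity (R : Type*) [CommRing R] [IsLocalRing R] : Prop :=
  ∃ x : R, (x ∈ maximalIdeal R ∧
      ∃ n : ℕ, maximalIdeal R ^ (n + 1) = Ideal.span {x} * maximalIdeal R ^ n) ∧
    maximalIdeal R ^ 2 = Ideal.span {x} * maximalIdeal R

theorem aux_div {R : Type*} [CommRing R] {d : R} (hd : d ∈ nonZeroDivisors R)
    {M : Type*} [AddCommGroup M] [Module R M] (J : Ideal R) (h : M →ₗ[R] R)
    (H : ∀ m, ∃ y ∈ J, h m = d * y) : ∃ g : M →ₗ[R] J, ∀ m, h m = d * (g m : R) := by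
  choose y hy hh using H
  refine ⟨{ toFun := fun m => ⟨y m, hy m⟩, map_add' := ?_, map_smul' := ?_ }, fun m => hh m⟩
  · intro a b
    ext
    apply (mul_cancel_left_mem_nonZeroDivisors hd).1
    simp only [Submodule.coe_add, mul_add, ← hh, map_add]
  · intro r a
    ext
    apply (mul_cancel_left_mem_nonZeroDivisors hd).1
    simp only [RingHom.id_apply, Submodule.coe_smul, smul_eq_mul, ← hh, map_smul]
    rw [hh a]; ring

theorem aux_div' {R : Type*} [CommRing R] {d : R} (hd : d ∈ nonZeroDivisors R)
    {M : Type*} [AddCommGroup M] [Module R M] (h : M →ₗ[R] R)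
    (H : ∀ m, d ∣ h m) : ∃ g : M →ₗ[R] R, ∀ m, h m = d * g m := by
  obtain ⟨g, hg⟩ := aux_div hd ⊤ h (fun m => by
    obtain ⟨y, hy⟩ := H m
    exact ⟨y, trivial, hy⟩)
  exact ⟨(Submodule.subtype _).comp g, hg⟩

theorem aux_comm {R : Type*} [CommRing R] {J : Ideal R} (f : J →ₗ[R] R) (x y : J) :
    (x : R) * f y = y * f x := by
  rw [← smul_eq_mul, ← smul_eq_mul, ← map_smul, ← map_smul]
  congr 1
  ext
  simp [mul_comm]

theorem aux_refl {R : Type*} [CommRing R] {d : R} (hd : d ∈ nonZeroDivisors R)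
    {J : Ideal R} (hdJ : d ∈ J) :
    Module.IsReflexive R J ↔
      ∀ x, (∀ c, (∀ y ∈ J, d ∣ c * y) → d ∣ c * x) → x ∈ J := by
  constructor
  · intro h x hx
    obtain ⟨F, hF⟩ := aux_div' hd (x • Module.Dual.eval R J ⟨d, hdJ⟩) (fun f => by
      have := hx (f ⟨d, hdJ⟩) (fun y hy => ⟨f ⟨y, hy⟩, by
        rw [aux_comm f ⟨d, hdJ⟩ ⟨y, hy⟩, mul_comm]⟩)
      simpa [mul_comm] using this)
    obtain ⟨y, hy⟩ := h.bijective_dual_eval'.2 F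
    have h1 := hF (Submodule.subtype J)
    rw [← hy] at h1
    simp only [LinearMap.smul_apply, Module.Dual.eval_apply, Submodule.subtype_apply,
      smul_eq_mul] at h1
    rw [mul_comm] at h1
    rw [(mul_cancel_left_mem_nonZeroDivisors hd).1 h1]
    exact y.2
  · intro h
    refine ⟨⟨?_, ?_⟩⟩
    · intro y z hyz
      ext
      exact LinearMap.congr_fun hyz (Submodule.subtype J)
    · intro F
      have hx : F (Submodule.subtype J) ∈ J := by
        apply h
        intro c hc
        obtain ⟨g, hg⟩ := aux_div' hd (c • Submodule.subtype J) (fun y => by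
          simpa using hc y y.2)
        refine ⟨F g, ?_⟩
        rw [← smul_eq_mul, ← smul_eq_mul, ← map_smul, ← map_smul]
        congr 1
        ext y
        simpa using hg y
      refine ⟨⟨_, hx⟩, ?_⟩
      ext f
      apply (mul_cancel_left_mem_nonZeroDivisors hd).1
      simp only [Module.Dual.eval_apply]
      rw [aux_comm f ⟨d, hdJ⟩ ⟨_, hx⟩]
      rw [mul_comm _ (f _), ← smul_eq_mul, ← smul_eq_mul, ← map_smul, ← map_smul]
      congr 1
      ext y
      have := aux_comm f ⟨d, hdJ⟩ y
      simp only [LinearMap.smul_apply, Submodule.subtype_apply, smul_eq_mul] at this ⊢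
      rw [this, mul_comm]

theorem aux_mem {R : Type*} [CommRing R] {M : Type*} [AddCommGroup M]
    [Module R M] (f : M →ₗ[R] R) (m : M) : f m ∈ traceIdeal R M :=
  Submodule.mem_iSup_of_mem f ⟨m, rfl⟩

theorem aux_nzd {R : Type*} [CommRing R] [IsNoetherianRing R] (I : Ideal R)
    (hI : ∀ a : R, (∀ x ∈ I, a * x = 0) → a = 0) : ∃ d ∈ I, d ∈ nonZeroDivisors R := by
  by_contra! hcon
  have hsub : (I : Set R) ⊆ ⋃ p ∈ associatedPrimes R R, (p : Set R) := by
    rw [biUnion_associatedPrimes_eq_compl_nonZeroDivisors]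
    exact fun x hx => hcon x hx
  obtain ⟨p, hp, hIp⟩ := (Ideal.subset_union_prime_finite
    (associatedPrimes.finite R R) 0 0 (fun p hp _ _ => hp.isPrime)).1 hsub
  obtain ⟨hprime, a, ha⟩ := isAssociatedPrime_iff.1 hp
  have ha0 : a = 0 := hI a fun x hx => by
    have := hIp hx
    rw [ha] at this
    simpa [Submodule.mem_colon_singleton, mul_comm] using this
  apply hprime.ne_top
  rw [ha, ha0]
  ext
  simp [Submodule.mem_colon_singleton]

/-- `e ∈ (d) : tr I` iff `e I ⊆ d I`. -/
theorem aux_E {R : Type*} [CommRing R] {d : R} (hd : d ∈ nonZeroDivisors R)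
    {I : Ideal R} (hdI : d ∈ I) (href : Module.IsReflexive R I) (e : R) :
    (∀ t ∈ traceIdeal R I, d ∣ e * t) ↔ ∀ x ∈ I, ∃ y ∈ I, e * x = d * y := by
  constructor
  · intro h x hx
    obtain ⟨y, hy⟩ := h x (aux_mem (Submodule.subtype I) ⟨x, hx⟩)
    refine ⟨y, (aux_refl hd hdI).1 href y ?_, hy⟩
    intro c hc
    obtain ⟨g, hg⟩ := aux_div' hd (c • Submodule.subtype I) (fun y => by
      simpa using hc y y.2)
    obtain ⟨z, hz⟩ := h _ (aux_mem g ⟨x, hx⟩)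
    refine ⟨z, ?_⟩
    have h2 := hg ⟨x, hx⟩
    simp only [LinearMap.smul_apply, Submodule.subtype_apply, smul_eq_mul] at h2
    apply (mul_cancel_left_mem_nonZeroDivisors hd).1
    rw [← hz]
    linear_combination e * h2 - c * hy
  · intro h t ht
    have : traceIdeal R I ≤ Submodule.comap (LinearMap.mulLeft R e) (Ideal.span {d}) := by
      refine iSup_le fun f => ?_
      rintro _ ⟨x, rfl⟩
      obtain ⟨y, hy, hxy⟩ := h x x.2
      simp only [Submodule.mem_comap, LinearMap.mulLeft_apply, Ideal.mem_span_singleton]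
      refine ⟨f ⟨y, hy⟩, ?_⟩
      rw [← smul_eq_mul, ← smul_eq_mul, ← map_smul, ← map_smul]
      congr 1
      ext
      simpa using hxy
    simpa [Ideal.mem_span_singleton] using this ht

theorem aux_trE {R : Type*} [CommRing R] {d : R} (hd : d ∈ nonZeroDivisors R)
    {I : Ideal R} (hdI : d ∈ I) (c : R) :
    c ∈ traceIdeal R (Module.End R I) ↔
      ∀ e, (∀ x ∈ I, ∃ y ∈ I, e * x = d * y) → d ∣ e * c := by
  constructor
  · intro hc e he
    obtain ⟨ψ, hψ⟩ := aux_div hd I (e • Submodule.subtype I) (fun y => by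
      simpa using he y y.2)
    have : traceIdeal R (Module.End R I) ≤
        Submodule.comap (LinearMap.mulLeft R e) (Ideal.span {d}) := by
      refine iSup_le fun g => ?_
      rintro _ ⟨φ, rfl⟩
      simp only [Submodule.mem_comap, LinearMap.mulLeft_apply, Ideal.mem_span_singleton]
      refine ⟨g (ψ ∘ₗ φ), ?_⟩
      rw [← smul_eq_mul, ← smul_eq_mul, ← map_smul, ← map_smul]
      congr 1
      ext x
      simpa using hψ (φ x)
    simpa [Ideal.mem_span_singleton] using this hc
  · intro h
    let ev : Module.End R I →ₗ[R] R :=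
      (Submodule.subtype I).comp (LinearMap.applyₗ (⟨d, hdI⟩ : I))
    obtain ⟨g, hg⟩ := aux_div' hd (c • ev) (fun φ => by
      have := h (φ ⟨d, hdI⟩ : R) (fun x hx => ⟨φ ⟨x, hx⟩, (φ ⟨x, hx⟩).2, by
        have := aux_comm ((Submodule.subtype I).comp φ) ⟨d, hdI⟩ ⟨x, hx⟩
        simp only [LinearMap.comp_apply, Submodule.subtype_apply] at this
        rw [this, mul_comm]⟩)
      simpa [ev, mul_comm] using this)
    have h1 := hg 1
    have h2 : c = g 1 := by
      apply (mul_cancel_left_mem_nonZeroDivisors hd).1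
      rw [← h1]
      simp [ev, mul_comm]
    rw [h2]
    exact aux_mem g 1

set_option synthInstance.maxHeartbeats 800000 in
/-- Let `R` be a reduced local Cohen–Macaulay ring and `I` a reflexive
ideal of `R` with regular trace ideal. Then `tr_R(I)` is reflexive if and only if
`tr_R(I) = tr_R(End_R(I))`. -/
theorem trace_reflexive_iff_trace_eq_trace_of_endomorphisms
    (R : Type*) [CommRing R] [IsNoetherianRing R] [IsLocalRing R] [IsReduced R]
    (hCM : IsCohenMacaulayLocalRing R)
    (I : Ideal R) (href : Module.IsReflexive R ↥I)
    (hreg : ∃ x ∈ traceIdeal R ↥I, x ∈ nonZeroDivisors R) :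
    Module.IsReflexive R ↥(traceIdeal R ↥I) ↔
      traceIdeal R ↥I = traceIdeal R (Module.End R ↥I) := by
  obtain ⟨d, hdI, hd⟩ : ∃ d ∈ I, d ∈ nonZeroDivisors R := by
    apply aux_nzd
    intro a ha
    obtain ⟨x, hx, hxn⟩ := hreg
    have hle : traceIdeal R I ≤ LinearMap.ker (LinearMap.mulLeft R a) := by
      refine iSup_le fun f => ?_
      rintro _ ⟨y, rfl⟩
      rw [LinearMap.mem_ker, LinearMap.mulLeft_apply, ← smul_eq_mul, ← map_smul]
      have : a • y = 0 := by
        ext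
        simpa using ha y y.2
      rw [this, map_zero]
    have h0 : a * x = 0 := by simpa using hle hx
    exact (mul_right_mem_nonZeroDivisors_eq_zero_iff hxn).1 h0
  have hdT : d ∈ traceIdeal R I := aux_mem (Submodule.subtype I) ⟨d, hdI⟩
  have key : ∀ c, c ∈ traceIdeal R (Module.End R I) ↔
      ∀ e, (∀ t ∈ traceIdeal R I, d ∣ e * t) → d ∣ e * c := by
    intro c
    rw [aux_trE hd hdI]
    simp only [aux_E hd hdI href]
  rw [aux_refl hd hdT]
  constructor
  · intro h
    apply le_antisymm
    · intro t ht
      exact (key t).2 fun e he => he t ht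
    · intro t ht
      exact h t ((key t).1 ht)
  · intro h x hx
    rw [h]
    exact (key x).2 hx
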